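/- Let c > 0, α > 0, p > 0 with p√α > c√π, and δ ≥ 0. Define ψ(β) = 2c√π(√α − √(α−β)) − pβ for β ≤ α, and define Φ(δ) = −[2πc² + 2√π c(√((√α·p − √π·c)² + δp) − √α·p) + δp]/p². Then Φ(δ) ≤ 0 (in particular Φ(δ) ≤ α) and ψ(Φ(δ)) = δ. -/

import Mathlib

open MeasureTheory Set Filter Real

/-!
Write `a = √α`, `k = √π c` and `S = √((a p - k)² + δ p)`. The numerator of `-Φ(δ)` is
`2k(S - (a p - k)) + δ p`, which is nonnegative because `S ≥ a p - k`; hence `Φ(δ) ≤ 0`.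
Moreover `α - Φ(δ)` is the perfect square `((S + k) / p)²`, so `√(α - Φ(δ)) = (S + k) / p`, and
substituting this in `ψ` leaves a rational identity.
-/

/-- For the inverse Gaussian risk process with cumulant
`ψ(β) = 2c√π(√α − √(α−β)) − pβ` (for `β ≤ α`), under the net profit condition
`p√α > c√π`, the explicit expression
`Φ(δ) = −[2πc² + 2√π c(√((√α·p − √π·c)² + δp) − √α·p) + δp]/p²`
satisfies `Φ(δ) ≤ 0` and `ψ(Φ(δ)) = δ` for every `δ ≥ 0`. -/
theorem stmt9 (c α p δ : ℝ) (hc : 0 < c) (hα : 0 < α) (hp : 0 < p)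
    (hnet : c * Real.sqrt π < p * Real.sqrt α) (hδ : 0 ≤ δ)
    (ψ : ℝ → ℝ)
    (hψ : ∀ β ≤ α, ψ β = 2 * c * Real.sqrt π * (Real.sqrt α - Real.sqrt (α - β)) - p * β)
    (Φδ : ℝ)
    (hΦ : Φδ = -(2 * π * c ^ 2 +
        2 * Real.sqrt π * c *
          (Real.sqrt ((Real.sqrt α * p - Real.sqrt π * c) ^ 2 + δ * p) - Real.sqrt α * p) +
        δ * p) / p ^ 2) :
    Φδ ≤ 0 ∧ ψ Φδ = δ := by
  have hπ : Real.sqrt π ^ 2 = π := Real.sq_sqrt Real.pi_pos.le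
  have hα2 : Real.sqrt α ^ 2 = α := Real.sq_sqrt hα.le
  have hr : 0 < Real.sqrt π := Real.sqrt_pos.mpr Real.pi_pos
  set a := Real.sqrt α
  set r := Real.sqrt π
  have hnn : 0 ≤ (a * p - r * c) ^ 2 + δ * p := by positivity
  set S := Real.sqrt ((a * p - r * c) ^ 2 + δ * p)
  have hS2 : S ^ 2 = (a * p - r * c) ^ 2 + δ * p := Real.sq_sqrt hnn
  have hS0 : 0 ≤ S := Real.sqrt_nonneg _
  have hS : a * p - r * c ≤ S := Real.le_sqrt_of_sq_le (by nlinarith [mul_nonneg hδ hp.le])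
  have hk : 0 < r * c := mul_pos hr hc
  have hΦ0 : Φδ ≤ 0 := by
    rw [hΦ, neg_div, neg_nonpos, ← hπ]
    refine div_nonneg ?_ (sq_nonneg p)
    nlinarith [mul_nonneg hk.le (sub_nonneg.mpr hS), mul_nonneg hδ hp.le]
  refine ⟨hΦ0, ?_⟩
  have hsq : α - Φδ = ((S + r * c) / p) ^ 2 := by
    rw [hΦ, ← hπ, ← hα2]
    field_simp
    linear_combination -hS2
  rw [hψ Φδ (hΦ0.trans hα.le), hsq, Real.sqrt_sq (by positivity), hΦ, ← hπ]
  field_simp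
  ring
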